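/- arXiv:2211.01306 — 2 statements merged into one kernel-verified Lean document; each statement's English description precedes it below -/
import Mathlib

section
/- Let K ≥ 2, τ > 0, and β ∈ ℝ^K with all β_i > 0. Let Y be uniformly distributed on the simplex S_K (i.e., Y has constant density (K−1)! with respect to the (K−1)-dimensional Lebesgue measure on S_K). Define T : S_K → S_K (on the interior) by T(y)_i = β_i^{1/τ} y_i^{−1/τ} / ∑_{j=1}^K β_j^{1/τ} y_j^{−1/τ}. Then X = T(Y) has the Concrete distribution C(β, τ); that is, the pushforward of the uniform measure on S_K under T has density f(x) = (K−1)! τ^{K−1} (∑_{j=1}^K β_j/x_j^τ)^{−K} ∏_{i=1}^K β_i/x_i^{τ+1} with respect to the (K−1)-dimensional Lebesgue measure on S_K. -/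
open MeasureTheory Finset

noncomputable def fillMap (K : ℕ) (u : Fin (K - 1) → ℝ) : Fin K → ℝ :=
  fun i => if h : (i : ℕ) < K - 1 then u ⟨i, h⟩ else 1 - ∑ j, u j

/-- The `(K-1)`-dimensional Lebesgue measure on the probability simplex `S_K`. -/
noncomputable def simplexMeasure (K : ℕ) : Measure (Fin K → ℝ) :=
  Measure.map (fillMap K)
    (volume.restrict {u : Fin (K - 1) → ℝ | (∀ j, 0 ≤ u j) ∧ ∑ j, u j ≤ 1})

/-- The density of the Concrete distribution `C(β, τ)` on the simplex. -/
noncomputable def concreteDensity (K : ℕ) (β : Fin K → ℝ) (τ : ℝ) (x : Fin K → ℝ) : ℝ :=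
  (Nat.factorial (K - 1) : ℝ) * τ ^ (K - 1) * (∑ j, β j / x j ^ τ) ^ (-(K : ℝ)) *
    ∏ i, β i / x i ^ (τ + 1)

/-!
The map `T` acts on logits by `a ↦ (log β - a) / τ`, and softmax ignores a common shift, so in the
chart `x = softmax (z, 0)` with `z : ℝ^(K-1)` it is affine with linear part `-1 / τ`. The Jacobian
of the chart, a rank-one perturbation of a diagonal matrix, has determinant `∏ i, x i`, so the
simplex measure is `∏ i, x i` times Lebesgue measure in these coordinates. An affine change of
variables thus gives `X` the density `(K-1)! τ^(K-1) ∏ i, y i / x i` at `x = T y`, where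
`y i` is proportional to `β i / x i ^ τ`.
-/

lemma det_diagonal_sub_vecMulVec {R ι : Type*} [CommRing R] [Fintype ι] [DecidableEq ι]
    (p q : ι → R) :
    (Matrix.diagonal p - Matrix.vecMulVec p q).det = (∏ i, p i) * (1 - ∑ i, q i) := by
  have hfactor : Matrix.diagonal p - Matrix.vecMulVec p q = Matrix.diagonal p *
      (1 + Matrix.replicateCol Unit (fun _ : ι => (-1 : R)) * Matrix.replicateRow Unit q) := by
    ext i j
    rw [mul_add, mul_one, Matrix.sub_apply, Matrix.add_apply, Matrix.diagonal_mul]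
    simp [Matrix.vecMulVec_apply, Matrix.mul_apply, sub_eq_add_neg]
  rw [hfactor, Matrix.det_mul, Matrix.det_diagonal,
    Matrix.det_one_add_replicateCol_mul_replicateRow]
  simp [dotProduct, sub_eq_add_neg]

lemma addHaar_setOf_affineMap_eq_zero {E F : Type*} [NormedAddCommGroup E] [NormedSpace ℝ E]
    [MeasurableSpace E] [BorelSpace E] [FiniteDimensional ℝ E] [AddCommGroup F] [Module ℝ F]
    (μ : Measure E) [μ.IsAddHaarMeasure] {f : E →ᵃ[ℝ] F} {x₀ : E} (hx₀ : f x₀ ≠ 0) :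
    μ {x | f x = 0} = 0 := by
  have hmem (x : E) : x ∈ (AffineSubspace.mk' (0 : F) ⊥).comap f ↔ f x = 0 := by
    simp [AffineSubspace.mem_comap]
  have hne : (AffineSubspace.mk' (0 : F) ⊥).comap f ≠ ⊤ := fun htop =>
    hx₀ ((hmem x₀).1 (htop ▸ AffineSubspace.mem_top ℝ E x₀))
  have hset : {x | f x = 0} = (AffineSubspace.mk' (0 : F) ⊥).comap f :=
    Set.ext fun x => (hmem x).symm
  rw [hset]
  exact Measure.addHaar_affineSubspace μ _ hne

lemma map_withDensity_comp {α γ : Type*} [MeasurableSpace α] [MeasurableSpace γ]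
    (μ : Measure α) {f : α → γ} {g : γ → ENNReal} (hf : Measurable f) (hg : Measurable g) :
    (μ.withDensity (g ∘ f)).map f = (μ.map f).withDensity g := by
  ext s hs
  rw [Measure.map_apply hf hs, withDensity_apply _ (hf hs), withDensity_apply _ hs,
    setLIntegral_map hs hg hf]
  rfl

lemma map_withDensity_const_add_smul {E : Type*} [NormedAddCommGroup E] [NormedSpace ℝ E]
    [MeasurableSpace E] [BorelSpace E] [FiniteDimensional ℝ E] (μ : Measure E)
    [μ.IsAddHaarMeasure] (c : E) {t : ℝ} (ht : t ≠ 0) {g : E → ENNReal} (hg : Measurable g) :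
    (μ.withDensity fun z => g (c + t • z)).map (fun z => c + t • z) =
      μ.withDensity (ENNReal.ofReal (|t⁻¹| ^ Module.finrank ℝ E) • g) := by
  have hmap : μ.map ((c + ·) ∘ (t • ·)) =
      ENNReal.ofReal (|t⁻¹| ^ Module.finrank ℝ E) • μ := by
    rw [← Measure.map_map (measurable_const_add c) (measurable_const_smul t),
      Measure.map_addHaar_smul _ ht, Measure.map_smul, map_add_left_eq_self, ← inv_pow, abs_pow]
  rw [withDensity_smul _ hg, ← withDensity_smul_measure, ← hmap]
  exact map_withDensity_comp μ (by fun_prop) hg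

section Softmax

variable {ι : Type*} [Fintype ι]

/-- The softmax map `a ↦ exp a / ∑ j, exp (a j)` from logits to the open probability simplex. -/
noncomputable def softmax (a : ι → ℝ) : ι → ℝ :=
  fun i => Real.exp (a i) / ∑ j, Real.exp (a j)

/-- The self-map of the simplex that raises every coordinate to the power `t`, reweights by `b`
and renormalizes. The map of the theorem and its inverse both have this form. -/
noncomputable def powerTilt (b : ι → ℝ) (t : ℝ) (x : ι → ℝ) : ι → ℝ :=
  fun i => b i * x i ^ t / ∑ j, b j * x j ^ t

lemma measurable_powerTilt (b : ι → ℝ) (t : ℝ) : Measurable (powerTilt b t) := by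
  unfold powerTilt
  fun_prop

lemma sum_exp_pos [Nonempty ι] (a : ι → ℝ) : 0 < ∑ j, Real.exp (a j) :=
  Finset.sum_pos (fun _ _ => Real.exp_pos _) Finset.univ_nonempty

lemma softmax_pos (a : ι → ℝ) (i : ι) : 0 < softmax a i :=
  have : Nonempty ι := ⟨i⟩
  div_pos (Real.exp_pos _) (sum_exp_pos a)

lemma softmax_add_const (a : ι → ℝ) (c : ℝ) : softmax (fun i => a i + c) = softmax a := by
  funext i
  simp only [softmax, Real.exp_add, ← Finset.sum_mul]
  exact mul_div_mul_right _ _ (Real.exp_pos c).ne'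

lemma powerTilt_softmax {b : ι → ℝ} (hb : ∀ i, 0 < b i) (t : ℝ) (a : ι → ℝ) :
    powerTilt b t (softmax a) = softmax (fun i => Real.log (b i) + t * a i) := by
  funext i
  have : Nonempty ι := ⟨i⟩
  have hZ := sum_exp_pos a
  have hweight (j : ι) : b j * softmax a j ^ t =
      Real.exp (Real.log (b j) + t * a j) / (∑ k, Real.exp (a k)) ^ t := by
    rw [softmax, Real.div_rpow (Real.exp_pos _).le hZ.le, ← Real.exp_mul, mul_comm (a j),
      Real.exp_add, Real.exp_log (hb j), mul_div_assoc]
  simp only [powerTilt, hweight, ← Finset.sum_div]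
  exact div_div_div_cancel_right₀ (Real.rpow_pos_of_pos hZ t).ne' _ _

lemma powerTilt_powerTilt_inv_softmax {b : ι → ℝ} (hb : ∀ i, 0 < b i) {s : ℝ} (hs : s ≠ 0)
    (a : ι → ℝ) :
    powerTilt b s (powerTilt (fun i => b i ^ (-s⁻¹)) s⁻¹ (softmax a)) = softmax a := by
  rw [powerTilt_softmax fun i => Real.rpow_pos_of_pos (hb i) _, powerTilt_softmax hb]
  congr 1
  funext i
  rw [Real.log_rpow (hb i)]
  field_simp
  ring

end Softmax

section AdditiveLogistic

variable {ι : Type*} [Fintype ι]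

/-- The open simplex `S_K` in the coordinates `x_1, …, x_{K-1}`. -/
def openCornerSimplex (ι : Type*) [Fintype ι] : Set (ι → ℝ) :=
  {u | (∀ j, 0 < u j) ∧ ∑ j, u j < 1}

/-- The additive logistic transform: softmax of the logits `z` together with one further logit
fixed to `0`, whose coordinate is dropped. -/
noncomputable def additiveLogistic (z : ι → ℝ) : ι → ℝ :=
  fun i => Real.exp (z i) / (1 + ∑ j, Real.exp (z j))

/-- The additive log-ratio transform, inverse to `additiveLogistic`. -/
noncomputable def additiveLogRatio (u : ι → ℝ) : ι → ℝ :=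
  fun i => Real.log (u i / (1 - ∑ j, u j))

lemma one_add_sum_exp_pos (z : ι → ℝ) : 0 < 1 + ∑ j, Real.exp (z j) := by
  positivity

lemma one_sub_sum_additiveLogistic (z : ι → ℝ) :
    1 - ∑ i, additiveLogistic z i = 1 / (1 + ∑ j, Real.exp (z j)) := by
  have hZ := (one_add_sum_exp_pos z).ne'
  simp only [additiveLogistic, ← Finset.sum_div]
  rw [eq_div_iff hZ, sub_mul, div_mul_cancel₀ _ hZ, one_mul, add_sub_cancel_right]

lemma additiveLogistic_mem_openCornerSimplex (z : ι → ℝ) :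
    additiveLogistic z ∈ openCornerSimplex ι := by
  have hZ := one_add_sum_exp_pos z
  exact ⟨fun j => div_pos (Real.exp_pos _) hZ,
    sub_pos.1 (one_sub_sum_additiveLogistic z ▸ one_div_pos.2 hZ)⟩

lemma additiveLogRatio_additiveLogistic (z : ι → ℝ) :
    additiveLogRatio (additiveLogistic z) = z := by
  funext i
  rw [additiveLogRatio, one_sub_sum_additiveLogistic, additiveLogistic,
    div_div_div_cancel_right₀ (one_add_sum_exp_pos z).ne', div_one, Real.log_exp]

lemma additiveLogistic_additiveLogRatio {u : ι → ℝ} (hu : u ∈ openCornerSimplex ι) :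
    additiveLogistic (additiveLogRatio u) = u := by
  have hrest : 0 < 1 - ∑ j, u j := sub_pos.2 hu.2
  have hexp (i : ι) : Real.exp (additiveLogRatio u i) = u i / (1 - ∑ j, u j) :=
    Real.exp_log (div_pos (hu.1 i) hrest)
  have hZ : 1 + (∑ j, u j) / (1 - ∑ j, u j) = 1 / (1 - ∑ j, u j) := by
    field_simp
    ring
  funext i
  simp only [additiveLogistic, hexp, ← Finset.sum_div]
  rw [hZ, div_div_div_cancel_right₀ hrest.ne', div_one]

lemma additiveLogistic_injective : Function.Injective (additiveLogistic (ι := ι)) :=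
  Function.LeftInverse.injective additiveLogRatio_additiveLogistic

lemma range_additiveLogistic : Set.range (additiveLogistic (ι := ι)) = openCornerSimplex ι :=
  Set.Subset.antisymm (Set.range_subset_iff.2 additiveLogistic_mem_openCornerSimplex)
    fun u hu => ⟨additiveLogRatio u, additiveLogistic_additiveLogRatio hu⟩

lemma measurable_additiveLogistic : Measurable (additiveLogistic (ι := ι)) := by
  unfold additiveLogistic
  fun_prop

lemma additiveLogistic_eq_exp_sub_log (z : ι → ℝ) (i : ι) :
    additiveLogistic z i = Real.exp (z i - Real.log (1 + ∑ j, Real.exp (z j))) := by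
  rw [Real.exp_sub, Real.exp_log (one_add_sum_exp_pos z), additiveLogistic]

lemma hasFDerivAt_log_one_add_sum_exp (z : ι → ℝ) :
    HasFDerivAt (fun z : ι → ℝ => Real.log (1 + ∑ j, Real.exp (z j)))
      (∑ j, additiveLogistic z j • (ContinuousLinearMap.proj j : (ι → ℝ) →L[ℝ] ℝ)) z := by
  have hsum : HasFDerivAt (fun z : ι → ℝ => 1 + ∑ j, Real.exp (z j))
      (∑ j, Real.exp (z j) • (ContinuousLinearMap.proj j : (ι → ℝ) →L[ℝ] ℝ)) z :=
    (HasFDerivAt.fun_sum fun j _ => (hasFDerivAt_apply j z).exp).const_add 1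
  refine (hsum.log (one_add_sum_exp_pos z).ne').congr_fderiv ?_
  simp only [Finset.smul_sum, smul_smul, additiveLogistic, div_eq_inv_mul]

lemma hasFDerivAt_additiveLogistic [DecidableEq ι] (z : ι → ℝ) :
    HasFDerivAt additiveLogistic (Matrix.toLin' (Matrix.diagonal (additiveLogistic z) -
      Matrix.vecMulVec (additiveLogistic z) (additiveLogistic z))).toContinuousLinearMap z := by
  refine hasFDerivAt_pi'.2 fun i => ?_
  simp only [additiveLogistic_eq_exp_sub_log _ i]
  refine ((hasFDerivAt_apply i z).sub (hasFDerivAt_log_one_add_sum_exp z)).exp.congr_fderiv ?_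
  refine ContinuousLinearMap.ext fun v => ?_
  simp [← additiveLogistic_eq_exp_sub_log, Matrix.mulVec_diagonal, Matrix.vecMulVec_mulVec,
    dotProduct, mul_sub]

lemma map_additiveLogistic_withDensity :
    ((volume : Measure (ι → ℝ)).withDensity fun z => ENNReal.ofReal
      ((∏ i, additiveLogistic z i) * (1 - ∑ i, additiveLogistic z i))).map additiveLogistic =
      volume.restrict (openCornerSimplex ι) := by
  classical
  have hdet (z : ι → ℝ) : |(Matrix.toLin' (Matrix.diagonal (additiveLogistic z) -
      Matrix.vecMulVec (additiveLogistic z) (additiveLogistic z))).toContinuousLinearMap.det| =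
      (∏ i, additiveLogistic z i) * (1 - ∑ i, additiveLogistic z i) := by
    have hz := additiveLogistic_mem_openCornerSimplex z
    rw [ContinuousLinearMap.det, LinearMap.coe_toContinuousLinearMap, LinearMap.det_toLin',
      det_diagonal_sub_vecMulVec, abs_of_pos]
    exact mul_pos (Finset.prod_pos fun i _ => hz.1 i) (sub_pos.2 hz.2)
  have hchange := map_withDensity_abs_det_fderiv_eq_addHaar (volume : Measure (ι → ℝ))
    MeasurableSet.univ.nullMeasurableSet
    (fun z _ => (hasFDerivAt_additiveLogistic z).hasFDerivWithinAt) additiveLogistic_injective.injOn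
  simpa only [Measure.restrict_univ, Set.image_univ, range_additiveLogistic, hdet] using hchange

end AdditiveLogistic

section SimplexMeasure

variable {n : ℕ}

lemma fillMap_castSucc (u : Fin n → ℝ) (i : Fin n) : fillMap (n + 1) u i.castSucc = u i := by
  simp [fillMap]

lemma fillMap_last (u : Fin n → ℝ) : fillMap (n + 1) u (Fin.last n) = 1 - ∑ j, u j := by
  simp [fillMap]

lemma measurable_fillMap (K : ℕ) : Measurable (fillMap K) := by
  refine measurable_pi_iff.2 fun i => ?_
  unfold fillMap
  split_ifs <;> fun_prop

lemma restrict_closedCornerSimplex_eq_restrict_open {ι : Type*} [Fintype ι] :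
    (volume : Measure (ι → ℝ)).restrict {u | (∀ j, 0 ≤ u j) ∧ ∑ j, u j ≤ 1} =
      volume.restrict (openCornerSimplex ι) := by
  have hcoord : ∀ᵐ u : ι → ℝ, ∀ j, u j ≠ 0 := by
    refine ae_all_iff.2 fun j => ?_
    simpa [ae_iff] using addHaar_setOf_affineMap_eq_zero volume
      (f := (LinearMap.proj j : (ι → ℝ) →ₗ[ℝ] ℝ).toAffineMap) (x₀ := 1) (by simp)
  have hsum : ∀ᵐ u : ι → ℝ, 1 - ∑ j, u j ≠ 0 := by
    simpa [ae_iff] using addHaar_setOf_affineMap_eq_zero volume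
      (f := AffineMap.const ℝ (ι → ℝ) (1 : ℝ) -
        (∑ j, LinearMap.proj j : (ι → ℝ) →ₗ[ℝ] ℝ).toAffineMap) (x₀ := 0) (by simp)
  refine Measure.restrict_congr_set ?_
  filter_upwards [hcoord, hsum] with u hu hu'
  refine propext (and_congr (forall_congr' fun j => ?_) ?_)
  · exact (hu j).symm.le_iff_lt
  · exact (sub_ne_zero.1 hu').symm.le_iff_lt

/-- The logit parametrization of the open simplex, with the last logit normalized to `0`. -/
noncomputable def logitChart (z : Fin n → ℝ) : Fin (n + 1) → ℝ :=
  softmax (Fin.snoc z 0 : Fin (n + 1) → ℝ)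

lemma logitChart_pos (z : Fin n → ℝ) (i : Fin (n + 1)) : 0 < logitChart z i :=
  softmax_pos _ i

lemma fillMap_additiveLogistic (z : Fin n → ℝ) :
    fillMap (n + 1) (additiveLogistic z) = logitChart z := by
  have hZ : ∑ j, Real.exp ((Fin.snoc z 0 : Fin (n + 1) → ℝ) j) = 1 + ∑ j, Real.exp (z j) := by
    simp [Fin.sum_univ_castSucc, add_comm]
  funext i
  refine Fin.lastCases ?_ (fun i => ?_) i
  · rw [fillMap_last, one_sub_sum_additiveLogistic, logitChart, softmax, hZ, Fin.snoc_last,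
      Real.exp_zero]
  · rw [fillMap_castSucc, logitChart, softmax, hZ, Fin.snoc_castSucc]
    rfl

lemma measurable_logitChart : Measurable (logitChart (n := n)) := by
  rw [← funext fillMap_additiveLogistic]
  exact (measurable_fillMap (n + 1)).comp measurable_additiveLogistic

lemma simplexMeasure_eq_map_logitChart (n : ℕ) :
    simplexMeasure (n + 1) =
      ((volume : Measure (Fin n → ℝ)).withDensity fun z =>
        ENNReal.ofReal (∏ i, logitChart z i)).map logitChart := by
  have hprod (z : Fin n → ℝ) : ∏ i, logitChart z i =
      (∏ i, additiveLogistic z i) * (1 - ∑ i, additiveLogistic z i) := by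
    simp only [← fillMap_additiveLogistic, Fin.prod_univ_castSucc, fillMap_castSucc, fillMap_last]
  calc simplexMeasure (n + 1)
      = (volume.restrict (openCornerSimplex (Fin n))).map (fillMap (n + 1)) :=
        congrArg _ restrict_closedCornerSimplex_eq_restrict_open
    _ = _ := by
        rw [← map_additiveLogistic_withDensity,
          Measure.map_map (measurable_fillMap (n + 1)) measurable_additiveLogistic]
        simp only [hprod, Function.comp_def, fillMap_additiveLogistic]

lemma ae_simplexMeasure_pos (n : ℕ) : ∀ᵐ x ∂simplexMeasure (n + 1), ∀ i, 0 < x i := by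
  rw [simplexMeasure_eq_map_logitChart]
  refine (ae_map_iff measurable_logitChart.aemeasurable ?_).2 (ae_of_all _ logitChart_pos)
  measurability

lemma simplexMeasure_withDensity_eq_map_logitChart {g : (Fin (n + 1) → ℝ) → ENNReal}
    (hg : Measurable g) :
    (simplexMeasure (n + 1)).withDensity g =
      ((volume : Measure (Fin n → ℝ)).withDensity fun z =>
        ENNReal.ofReal (∏ i, logitChart z i) * g (logitChart z)).map logitChart := by
  have hchart : Measurable (logitChart (n := n)) := measurable_logitChart
  rw [simplexMeasure_eq_map_logitChart, ← map_withDensity_comp _ hchart hg,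
    ← withDensity_mul _ (by fun_prop) (hg.comp hchart)]
  rfl

end SimplexMeasure

section PowerTilt

variable {n : ℕ} {b : Fin (n + 1) → ℝ}

lemma powerTilt_logitChart (hb : ∀ i, 0 < b i) (t : ℝ) (z : Fin n → ℝ) :
    powerTilt b t (logitChart z) = logitChart
      ((fun i => Real.log (b i.castSucc) - Real.log (b (Fin.last n))) + t • z) := by
  rw [logitChart, powerTilt_softmax hb, logitChart,
    ← softmax_add_const (Fin.snoc _ 0) (Real.log (b (Fin.last n)))]
  congr 1
  funext i
  refine Fin.lastCases ?_ (fun i => ?_) i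
  · simp
  · simp only [Fin.snoc_castSucc, Pi.add_apply, Pi.smul_apply, smul_eq_mul]
    ring

lemma map_powerTilt_simplexMeasure_eq_map_logitChart (hb : ∀ i, 0 < b i) {s : ℝ} (hs : s ≠ 0) :
    (simplexMeasure (n + 1)).map (powerTilt (fun i => b i ^ (-s⁻¹)) s⁻¹) =
      ((volume : Measure (Fin n → ℝ)).withDensity (ENNReal.ofReal (|s| ^ n) • fun w =>
        ENNReal.ofReal (∏ i, powerTilt b s (logitChart w) i))).map logitChart := by
  obtain ⟨c, hshift⟩ : ∃ c : Fin n → ℝ, ∀ z,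
      powerTilt (fun i => b i ^ (-s⁻¹)) s⁻¹ (logitChart z) = logitChart (c + s⁻¹ • z) :=
    ⟨_, powerTilt_logitChart (fun i => Real.rpow_pos_of_pos (hb i) _) s⁻¹⟩
  have hinverse (z : Fin n → ℝ) : powerTilt b s (logitChart (c + s⁻¹ • z)) = logitChart z := by
    rw [← hshift]
    exact powerTilt_powerTilt_inv_softmax hb hs _
  have hchart : Measurable (logitChart (n := n)) := measurable_logitChart
  have htilt : Measurable fun w : Fin n → ℝ => powerTilt b s (logitChart w) :=
    (measurable_powerTilt b s).comp hchart
  have haffine := map_withDensity_const_add_smul volume c (inv_ne_zero hs)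
    (g := fun w => ENNReal.ofReal (∏ i, powerTilt b s (logitChart w) i)) (by fun_prop)
  rw [inv_inv, Module.finrank_fin_fun] at haffine
  rw [← haffine, simplexMeasure_eq_map_logitChart,
    Measure.map_map (measurable_powerTilt _ _) hchart, Measure.map_map hchart (by fun_prop)]
  simp only [hinverse, Function.comp_def, hshift]

theorem map_powerTilt_simplexMeasure (hb : ∀ i, 0 < b i) {s : ℝ} (hs : s ≠ 0) :
    (simplexMeasure (n + 1)).map (powerTilt (fun i => b i ^ (-s⁻¹)) s⁻¹) =
      (simplexMeasure (n + 1)).withDensity fun x =>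
        ENNReal.ofReal (|s| ^ n * ∏ i, powerTilt b s x i / x i) := by
  have htilt : Measurable (powerTilt b s) := measurable_powerTilt b s
  rw [map_powerTilt_simplexMeasure_eq_map_logitChart hb hs,
    simplexMeasure_withDensity_eq_map_logitChart (by fun_prop)]
  congr 2
  funext w
  have hw : 0 < ∏ i, logitChart w i := Finset.prod_pos fun i _ => logitChart_pos w i
  rw [Pi.smul_apply, smul_eq_mul, ← ENNReal.ofReal_mul (by positivity),
    ← ENNReal.ofReal_mul hw.le, Finset.prod_div_distrib]
  field_simp

end PowerTilt

lemma concreteDensity_eq_prod_powerTilt_div {K : ℕ} (β : Fin K → ℝ) (τ : ℝ) {x : Fin K → ℝ}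
    (hx : ∀ i, 0 < x i) :
    concreteDensity K β τ x =
      (K - 1).factorial * (τ ^ (K - 1) * ∏ i, powerTilt β (-τ) x i / x i) := by
  have hfactor (i : Fin K) : powerTilt β (-τ) x i / x i =
      β i / x i ^ (τ + 1) / ∑ j, β j / x j ^ τ := by
    simp only [powerTilt, Real.rpow_neg (hx _).le, ← div_eq_mul_inv]
    rw [Real.rpow_add_one (hx i).ne', div_right_comm, div_div (β i)]
  simp only [hfactor, Finset.prod_div_distrib, Finset.prod_const, Finset.card_fin, concreteDensity,
    Real.rpow_neg_natCast, zpow_neg, zpow_natCast]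
  ring

/-- The Concrete distribution is the pushforward of the uniform distribution on the
simplex (density `(K-1)!`) under the transformation
`T(y)_i = β_i^{1/τ} y_i^{-1/τ} / ∑_j β_j^{1/τ} y_j^{-1/τ}`. -/
theorem concrete_as_transformed_uniform
    (K : ℕ) (hK : 2 ≤ K) (τ : ℝ) (hτ : 0 < τ)
    (β : Fin K → ℝ) (hβ : ∀ i, 0 < β i) :
    Measure.map
      (fun y : Fin K → ℝ => fun i =>
        β i ^ (1 / τ) * y i ^ (-(1 / τ)) / ∑ j, β j ^ (1 / τ) * y j ^ (-(1 / τ)))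
      ((Nat.factorial (K - 1) : ENNReal) • simplexMeasure K)
    = (simplexMeasure K).withDensity
        (fun x => ENNReal.ofReal (concreteDensity K β τ x)) := by
  obtain ⟨n, rfl⟩ : ∃ n, K = n + 1 := ⟨K - 1, by omega⟩
  have hT : (fun y : Fin (n + 1) → ℝ => fun i =>
      β i ^ (1 / τ) * y i ^ (-(1 / τ)) / ∑ j, β j ^ (1 / τ) * y j ^ (-(1 / τ))) =
      powerTilt (fun i => β i ^ (-(-τ)⁻¹)) (-τ)⁻¹ := by
    funext y i
    simp [powerTilt]
  rw [hT, Measure.map_smul, map_powerTilt_simplexMeasure hβ (neg_ne_zero.2 hτ.ne'),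
    ← withDensity_smul' _ _ (ENNReal.natCast_ne_top _)]
  refine withDensity_congr_ae ?_
  filter_upwards [ae_simplexMeasure_pos n] with x hx
  rw [concreteDensity_eq_prod_powerTilt_div β τ hx, ENNReal.ofReal_mul (Nat.cast_nonneg _),
    ENNReal.ofReal_natCast, abs_neg, abs_of_pos hτ]
  rfl
end

section
/- Let K ≥ 2, τ > 0, and β ∈ ℝ^K with all β_i > 0. Let W_1, …, W_K be independent random variables each with standard Gumbel density e^{−(w + e^{−w})} on ℝ, and define X_i = softmax((W + log β)/τ)_i = exp((W_i + log β_i)/τ) / ∑_{j=1}^K exp((W_j + log β_j)/τ). Then X has the Concrete distribution C(β, τ); that is, the pushforward of the product of K standard Gumbel measures under the map w ↦ softmax((w + log β)/τ) is the measure on S_K with density f(x) = (K−1)! τ^{K−1} (∑_{j=1}^K β_j/x_j^τ)^{−K} ∏_{i=1}^K β_i/x_i^{τ+1} with respect to the (K−1)-dimensional Lebesgue measure on S_K. -/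
open MeasureTheory Finset

/-- The standard Gumbel distribution, with density `exp(-(w + exp(-w)))` on `ℝ`. -/
noncomputable def gumbelMeasure : Measure ℝ :=
  volume.withDensity (fun w => ENNReal.ofReal (Real.exp (-(w + Real.exp (-w)))))

/-!
Put `Y i = exp ((W i + log (β i)) / τ)`, so that `X` is `Y` divided by its coordinate sum. The `Y i`
are independent Fréchet variables. In the coordinates `y = s • x`, with `s` the coordinate sum of
`y` and `x` in the simplex, Lebesgue measure on the orthant of `ℝⁿ⁺¹` is `s ^ n ds` times the
simplex measure, so the density of `X` at `x` is the integral over `s > 0` of `s ^ n` times the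
density of `Y` at `s • x`. With `c = ∑ j, β j / x j ^ τ`, this integrand is a constant times
`s ^ (-τ * (n + 1) - 1) * exp (-(c * s ^ (-τ)))`, and the substitution `t = s ^ (-τ)` turns the
integral into `Γ(n + 1) * c ^ (-(n + 1))`, up to a factor `1 / τ`.
-/

section ProductDensity

variable {ι : Type*} {α : ι → Type*} [∀ i, MeasurableSpace (α i)]

theorem lmarginal_prod_eq_prod_lintegral [DecidableEq ι] (μ : ∀ i, Measure (α i))
    [∀ i, SigmaFinite (μ i)] {f : ∀ i, α i → ENNReal} (hf : ∀ i, Measurable (f i))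
    (s : Finset ι) (x : ∀ i, α i) :
    (∫⋯∫⁻_s, (fun y => ∏ i ∈ s, f i (y i)) ∂μ) x = ∏ i ∈ s, ∫⁻ t, f i t ∂μ i := by
  induction s using Finset.induction_on generalizing x with
  | empty => simp
  | insert i s hi ih =>
    have hmeas (u : Finset ι) : Measurable fun y : ∀ i, α i => ∏ j ∈ u, f j (y j) :=
      Finset.measurable_prod _ fun j _ => (hf j).comp (measurable_pi_apply j)
    have hsplit (y : ∀ i, α i) (t : α i) :
        ∏ j ∈ insert i s, f j (Function.update y i t j) = f i t * ∏ j ∈ s, f j (y j) := by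
      rw [prod_insert hi, Function.update_self]
      congr 1
      exact prod_congr rfl fun j hj => by
        rw [Function.update_of_ne (ne_of_mem_of_not_mem hj hi)]
    rw [lmarginal_insert' _ (hmeas _) hi, prod_insert hi, ← ih x]
    simp only [hsplit, lintegral_mul_const _ (hf i)]
    exact lintegral_const_mul _ ((hmeas s).comp measurable_updateFinset)

variable [Fintype ι]

theorem lintegral_pi_prod_eq_prod_lintegral (μ : ∀ i, Measure (α i))
    [∀ i, SigmaFinite (μ i)] {f : ∀ i, α i → ENNReal} (hf : ∀ i, Measurable (f i)) :
    ∫⁻ x, ∏ i, f i (x i) ∂Measure.pi μ = ∏ i, ∫⁻ t, f i t ∂μ i := by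
  classical
  rcases isEmpty_or_nonempty (∀ i, α i) with hα | ⟨⟨x⟩⟩
  · obtain ⟨i, hi⟩ := isEmpty_pi.mp hα
    rw [lintegral_of_isEmpty, prod_eq_zero (mem_univ i) (lintegral_of_isEmpty _ _)]
  · rw [lintegral_eq_lmarginal_univ x, lmarginal_prod_eq_prod_lintegral μ hf]

theorem pi_withDensity (μ : ∀ i, Measure (α i)) [∀ i, SigmaFinite (μ i)]
    {f : ∀ i, α i → ENNReal} (hf : ∀ i, Measurable (f i))
    [∀ i, SigmaFinite ((μ i).withDensity (f i))] :
    Measure.pi (fun i => (μ i).withDensity (f i)) =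
      (Measure.pi μ).withDensity fun x => ∏ i, f i (x i) := by
  refine Measure.pi_eq fun s hs => ?_
  rw [withDensity_apply _ (.univ_pi hs), Measure.restrict_pi_pi,
    lintegral_pi_prod_eq_prod_lintegral _ hf]
  exact prod_congr rfl fun i _ => (withDensity_apply _ (hs i)).symm

end ProductDensity

section SumSlice

variable {n : ℕ}

/-- The point of the hyperplane `∑ i, y i = s` whose first `n` coordinates are `v`. It
parametrizes the slices of `ℝⁿ⁺¹` by the coordinate sum; `fillMap` is the slice `s = 1`. -/
def sumSlice (s : ℝ) (v : Fin n → ℝ) : Fin (n + 1) → ℝ :=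
  Fin.snoc v (s - ∑ j, v j)

@[simp]
theorem sumSlice_castSucc (s : ℝ) (v : Fin n → ℝ) (j : Fin n) : sumSlice s v j.castSucc = v j :=
  Fin.snoc_castSucc (α := fun _ => ℝ) ..

@[simp]
theorem sumSlice_last (s : ℝ) (v : Fin n → ℝ) : sumSlice s v (Fin.last n) = s - ∑ j, v j :=
  Fin.snoc_last (α := fun _ => ℝ) ..

theorem sum_sumSlice (s : ℝ) (v : Fin n → ℝ) : ∑ i, sumSlice s v i = s := by
  simp [Fin.sum_univ_castSucc]

theorem smul_sumSlice (r s : ℝ) (v : Fin n → ℝ) :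
    r • sumSlice s v = sumSlice (r * s) (r • v) := by
  ext i
  induction i using Fin.lastCases <;> simp [mul_sub, mul_sum]

theorem measurable_sumSlice :
    Measurable fun p : ℝ × (Fin n → ℝ) => sumSlice p.1 p.2 := by
  refine measurable_pi_lambda _ fun i => ?_
  induction i using Fin.lastCases <;> simp only [sumSlice_last, sumSlice_castSucc] <;> fun_prop

theorem fillMap_succ (u : Fin n → ℝ) : fillMap (n + 1) u = sumSlice 1 u := by
  ext i
  induction i using Fin.lastCases <;> simp [fillMap]

theorem nonneg_sumSlice_one_iff (u : Fin n → ℝ) :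
    0 ≤ sumSlice 1 u ↔ (∀ j, 0 ≤ u j) ∧ ∑ j, u j ≤ 1 := by
  simp [Pi.le_def, Fin.forall_fin_succ']

theorem lintegral_eq_lintegral_sumSlice {F : (Fin (n + 1) → ℝ) → ENNReal} (hF : Measurable F) :
    ∫⁻ y, F y = ∫⁻ s : ℝ, ∫⁻ v : Fin n → ℝ, F (sumSlice s v) := by
  have hsnoc (v : Fin n → ℝ) (a : ℝ) :
      (MeasurableEquiv.piFinSuccAbove (fun _ => ℝ) (Fin.last n)).symm (a, v) =
        sumSlice (a + ∑ j, v j) v := by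
    rw [sumSlice, add_sub_cancel_right]
    exact Fin.insertNth_last (α := fun _ => ℝ) a v
  have hpres := (volume_preserving_piFinSuccAbove (fun _ => ℝ) (Fin.last n)).symm
  calc ∫⁻ y, F y
      = ∫⁻ p : ℝ × (Fin n → ℝ), F (sumSlice (p.1 + ∑ j, p.2 j) p.2) := by
        simp only [← hpres.lintegral_comp hF, ← hsnoc]
    _ = ∫⁻ v : Fin n → ℝ, ∫⁻ a : ℝ, F (sumSlice (a + ∑ j, v j) v) :=
        lintegral_prod_symm' _ (hF.comp (measurable_sumSlice.comp
          (f := fun p : ℝ × (Fin n → ℝ) => (p.1 + ∑ j, p.2 j, p.2)) (by fun_prop)))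
    _ = ∫⁻ v : Fin n → ℝ, ∫⁻ s : ℝ, F (sumSlice s v) :=
        lintegral_congr fun v => lintegral_add_right_eq_self (fun s => F (sumSlice s v)) _
    _ = ∫⁻ s : ℝ, ∫⁻ v : Fin n → ℝ, F (sumSlice s v) :=
        lintegral_lintegral_swap (hF.comp (measurable_sumSlice.comp measurable_swap)).aemeasurable

end SumSlice

theorem lintegral_eq_ofReal_abs_pow_mul_lintegral_smul {E : Type*} [NormedAddCommGroup E]
    [NormedSpace ℝ E] [FiniteDimensional ℝ E] [MeasurableSpace E] [BorelSpace E] (μ : Measure E)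
    [μ.IsAddHaarMeasure] {r : ℝ} (hr : r ≠ 0) {F : E → ENNReal} (hF : Measurable F) :
    ∫⁻ v, F v ∂μ = ENNReal.ofReal |r ^ Module.finrank ℝ E| * ∫⁻ u, F (r • u) ∂μ := by
  have hrn : r ^ Module.finrank ℝ E ≠ 0 := pow_ne_zero _ hr
  rw [← lintegral_map hF (measurable_const_smul r), Measure.map_addHaar_smul _ hr,
    lintegral_smul_measure, smul_eq_mul, ← mul_assoc, ← ENNReal.ofReal_mul (abs_nonneg _),
    ← abs_mul, mul_inv_cancel₀ hrn, abs_one, ENNReal.ofReal_one, one_mul]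

section Simplex

instance (K : ℕ) : SFinite (simplexMeasure K) := by
  unfold simplexMeasure
  infer_instance

variable {n : ℕ}

theorem simplexMeasure_succ :
    simplexMeasure (n + 1) =
      ((volume : Measure (Fin n → ℝ)).restrict (sumSlice 1 ⁻¹' Set.Ici 0)).map (sumSlice 1) := by
  have hfill : fillMap (n + 1) = sumSlice 1 := funext fillMap_succ
  have hdomain : sumSlice 1 ⁻¹' Set.Ici 0 = {u : Fin n → ℝ | (∀ j, 0 ≤ u j) ∧ ∑ j, u j ≤ 1} :=
    Set.ext nonneg_sumSlice_one_iff
  rw [simplexMeasure, hfill, hdomain]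
  rfl

theorem lintegral_simplexMeasure {F : (Fin (n + 1) → ℝ) → ENNReal} (hF : Measurable F) :
    ∫⁻ x, F x ∂simplexMeasure (n + 1) =
      ∫⁻ u : Fin n → ℝ, (Set.Ici 0).indicator F (sumSlice 1 u) := by
  have hslice : Measurable (sumSlice (n := n) 1) := measurable_sumSlice.of_uncurry_left
  rw [simplexMeasure_succ, lintegral_map hF hslice,
    ← lintegral_indicator (hslice measurableSet_Ici)]
  rfl

theorem ae_mem_stdSimplex_simplexMeasure :
    ∀ᵐ x ∂simplexMeasure (n + 1), x ∈ stdSimplex ℝ (Fin (n + 1)) := by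
  have hslice : Measurable (sumSlice (n := n) 1) := measurable_sumSlice.of_uncurry_left
  rw [simplexMeasure_succ]
  refine (ae_map_iff hslice.aemeasurable (isClosed_stdSimplex ℝ _).measurableSet).mpr ?_
  filter_upwards [ae_restrict_mem (hslice measurableSet_Ici)] with u hu
  exact ⟨hu, sum_sumSlice 1 u⟩

theorem lintegral_sumSlice_eq_lintegral_simplexMeasure {s : ℝ} (hs : 0 < s)
    {G : (Fin (n + 1) → ℝ) → ENNReal} (hG : Measurable G) :
    ∫⁻ v : Fin n → ℝ, (Set.Ici 0).indicator G (sumSlice s v) =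
      ∫⁻ x, ENNReal.ofReal (s ^ n) * G (s • x) ∂simplexMeasure (n + 1) := by
  have hscale (u : Fin n → ℝ) : (Set.Ici 0).indicator G (sumSlice s (s • u)) =
      (Set.Ici 0).indicator (fun x => G (s • x)) (sumSlice 1 u) := by
    have hsmul : sumSlice s (s • u) = s • sumSlice 1 u := by rw [smul_sumSlice, mul_one]
    rw [hsmul]
    by_cases hu : 0 ≤ sumSlice 1 u <;>
      simp [Set.indicator, hu, smul_nonneg_iff_nonneg_of_pos_left hs]
  have hGs : Measurable fun x => G (s • x) := hG.comp (measurable_const_smul s)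
  have hGI : Measurable fun v : Fin n → ℝ => (Set.Ici 0).indicator G (sumSlice s v) :=
    (hG.indicator measurableSet_Ici).comp measurable_sumSlice.of_uncurry_left
  rw [lintegral_const_mul _ hGs, lintegral_simplexMeasure hGs,
    lintegral_eq_ofReal_abs_pow_mul_lintegral_smul _ hs.ne' hGI, Module.finrank_fin_fun,
    abs_of_pos (pow_pos hs n)]
  simp only [hscale]

theorem setLIntegral_Ici_eq_lintegral_simplexMeasure {G : (Fin (n + 1) → ℝ) → ENNReal}
    (hG : Measurable G) :
    ∫⁻ y in Set.Ici 0, G y = ∫⁻ x, (∫⁻ s in Set.Ioi (0 : ℝ),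
      ENNReal.ofReal (s ^ n) * G (s • x)) ∂simplexMeasure (n + 1) := by
  have hnull (s : ℝ) (hs : s < 0) (v : Fin n → ℝ) :
      (Set.Ici 0).indicator G (sumSlice s v) = 0 := by
    refine Set.indicator_of_notMem (fun hv => hs.not_ge ?_) _
    exact (sum_nonneg fun i _ => hv i).trans_eq (sum_sumSlice s v)
  have hGI : Measurable ((Set.Ici 0).indicator G) := hG.indicator measurableSet_Ici
  calc ∫⁻ y in Set.Ici 0, G y
      = ∫⁻ s : ℝ, ∫⁻ v : Fin n → ℝ, (Set.Ici 0).indicator G (sumSlice s v) := by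
        rw [← lintegral_indicator measurableSet_Ici, lintegral_eq_lintegral_sumSlice hGI]
    _ = ∫⁻ s in Set.Ioi (0 : ℝ), ∫⁻ v : Fin n → ℝ, (Set.Ici 0).indicator G (sumSlice s v) := by
        have hneg : ∫⁻ s in Set.Iio (0 : ℝ), ∫⁻ v : Fin n → ℝ,
            (Set.Ici 0).indicator G (sumSlice s v) = 0 :=
          setLIntegral_eq_zero measurableSet_Iio fun s hs => by simp [hnull s hs]
        rw [restrict_Ioi_eq_restrict_Ici, ← lintegral_add_compl _ measurableSet_Ici,
          Set.compl_Ici, hneg, add_zero]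
    _ = ∫⁻ s in Set.Ioi (0 : ℝ), ∫⁻ x, ENNReal.ofReal (s ^ n) * G (s • x)
          ∂simplexMeasure (n + 1) :=
        setLIntegral_congr_fun measurableSet_Ioi fun s hs =>
          lintegral_sumSlice_eq_lintegral_simplexMeasure hs hG
    _ = _ := lintegral_lintegral_swap (by fun_prop)

theorem map_normalize_withDensity {g : (Fin (n + 1) → ℝ) → ENNReal} (hg : Measurable g) :
    ((volume.restrict (Set.Ici 0)).withDensity g).map (fun y i => y i / ∑ j, y j) =
      (simplexMeasure (n + 1)).withDensity fun x =>
        ∫⁻ s in Set.Ioi (0 : ℝ), ENNReal.ofReal (s ^ n) * g (s • x) := by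
  have hnorm : Measurable fun (y : Fin (n + 1) → ℝ) i => y i / ∑ j, y j := by fun_prop
  have hradial : Measurable fun p : (Fin (n + 1) → ℝ) × ℝ =>
      ENNReal.ofReal (p.2 ^ n) * g (p.2 • p.1) := by fun_prop
  refine Measure.ext_of_lintegral _ fun f hf => ?_
  have hfn : Measurable fun y : Fin (n + 1) → ℝ => f fun i => y i / ∑ j, y j := hf.comp hnorm
  rw [lintegral_map hf hnorm, lintegral_withDensity_eq_lintegral_mul _ hg hfn,
    setLIntegral_Ici_eq_lintegral_simplexMeasure (hg.mul hfn),
    lintegral_withDensity_eq_lintegral_mul _ hradial.lintegral_prod_right' hf]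
  refine lintegral_congr_ae ?_
  filter_upwards [ae_mem_stdSimplex_simplexMeasure] with x hx
  have hdirection (s : ℝ) (hs : 0 < s) : (fun i => (s • x) i / ∑ j, (s • x) j) = x := by
    ext i
    simp only [Pi.smul_apply, smul_eq_mul, ← mul_sum, hx.2, mul_one]
    exact mul_div_cancel_left₀ _ hs.ne'
  have hradial_x : Measurable fun s : ℝ => ENNReal.ofReal (s ^ n) * g (s • x) :=
    hradial.comp measurable_prodMk_left
  rw [Pi.mul_apply, ← lintegral_mul_const _ hradial_x]
  refine setLIntegral_congr_fun measurableSet_Ioi fun s hs => ?_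
  simp only [Pi.mul_apply, hdirection s hs, mul_assoc]

end Simplex

/-- The density on `[0, ∞)` of the Fréchet distribution of shape `τ` and scale `b ^ (1 / τ)`, the
law of `exp ((W + log b) / τ)` for a standard Gumbel variable `W`. It is only meaningful for
`0 ≤ y`, so measures with this density are restricted to `Set.Ici 0`. -/
noncomputable def frechetPDF (τ b y : ℝ) : ℝ :=
  τ * b * y ^ (-τ - 1) * Real.exp (-(b * y ^ (-τ)))

@[fun_prop]
theorem measurable_frechetPDF (τ b : ℝ) : Measurable (frechetPDF τ b) := by
  unfold frechetPDF
  fun_prop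

theorem frechetPDF_nonneg {τ b y : ℝ} (hτ : 0 ≤ τ) (hb : 0 ≤ b) (hy : 0 ≤ y) :
    0 ≤ frechetPDF τ b y := by
  unfold frechetPDF
  positivity

theorem abs_deriv_mul_gumbelDensity_eq_frechetPDF {τ b y : ℝ} (hτ : 0 < τ) (hb : 0 < b)
    (hy : 0 < y) :
    |τ * y⁻¹| * Real.exp (-((τ * Real.log y - Real.log b) +
      Real.exp (-(τ * Real.log y - Real.log b)))) = frechetPDF τ b y := by
  have hexp : Real.exp (-(τ * Real.log y - Real.log b)) = b * y ^ (-τ) := by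
    rw [neg_sub, sub_eq_add_neg, Real.exp_add, Real.exp_log hb, Real.rpow_def_of_pos hy]
    ring_nf
  rw [neg_add, Real.exp_add, hexp, abs_of_pos (by positivity), frechetPDF,
    Real.rpow_sub_one hy.ne']
  ring

theorem map_exp_gumbelMeasure {τ b : ℝ} (hτ : 0 < τ) (hb : 0 < b) :
    gumbelMeasure.map (fun w => Real.exp ((w + Real.log b) / τ)) =
      (volume.restrict (Set.Ici 0)).withDensity fun y => ENNReal.ofReal (frechetPDF τ b y) := by
  have hexp : Measurable fun w : ℝ => Real.exp ((w + Real.log b) / τ) := by fun_prop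
  let inv (y : ℝ) : ℝ := τ * Real.log y - Real.log b
  have left_inv (w : ℝ) : inv (Real.exp ((w + Real.log b) / τ)) = w := by
    simp only [inv]
    rw [Real.log_exp, mul_div_cancel₀ _ hτ.ne', add_sub_cancel_right]
  have right_inv (y : ℝ) (hy : 0 < y) : Real.exp ((inv y + Real.log b) / τ) = y := by
    simp only [inv]
    rw [sub_add_cancel, mul_div_cancel_left₀ _ hτ.ne', Real.exp_log hy]
  have himage : inv '' Set.Ioi 0 = Set.univ :=
    Set.eq_univ_of_forall fun w => ⟨_, Real.exp_pos _, left_inv w⟩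
  have hderiv (y : ℝ) (hy : y ∈ Set.Ioi 0) : HasDerivWithinAt inv (τ * y⁻¹) (Set.Ioi 0) y :=
    (((Real.hasDerivAt_log (ne_of_gt hy)).const_mul τ).sub_const _).hasDerivWithinAt
  have hinj : Set.InjOn inv (Set.Ioi 0) :=
    Set.LeftInvOn.injOn (f₁' := fun w => Real.exp ((w + Real.log b) / τ)) right_inv
  refine Measure.ext_of_lintegral _ fun f hf => ?_
  rw [lintegral_map hf hexp, gumbelMeasure,
    lintegral_withDensity_eq_lintegral_mul _ (by fun_prop) (by fun_prop),
    lintegral_withDensity_eq_lintegral_mul _ (by fun_prop) hf, ← restrict_Ioi_eq_restrict_Ici,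
    ← setLIntegral_univ, ← himage,
    lintegral_image_eq_lintegral_abs_deriv_mul measurableSet_Ioi hderiv hinj]
  refine setLIntegral_congr_fun measurableSet_Ioi fun y hy => ?_
  simp only [Pi.mul_apply, right_inv y hy]
  rw [← mul_assoc, ← ENNReal.ofReal_mul (abs_nonneg _),
    abs_deriv_mul_gumbelDensity_eq_frechetPDF hτ hb hy]

instance : SigmaFinite gumbelMeasure := SigmaFinite.withDensity_ofReal _

theorem map_exp_pi_gumbelMeasure {ι : Type*} [Fintype ι] {τ : ℝ} (hτ : 0 < τ) {β : ι → ℝ}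
    (hβ : ∀ i, 0 < β i) :
    (Measure.pi fun _ : ι => gumbelMeasure).map
        (fun w i => Real.exp ((w i + Real.log (β i)) / τ)) =
      (volume.restrict (Set.Ici 0)).withDensity
        fun y => ∏ i, ENNReal.ofReal (frechetPDF τ (β i) (y i)) := by
  have hmarginal (i : ι) := map_exp_gumbelMeasure hτ (hβ i)
  have (i : ι) : SigmaFinite
      (gumbelMeasure.map fun w => Real.exp ((w + Real.log (β i)) / τ)) := by
    rw [hmarginal i]
    exact SigmaFinite.withDensity_ofReal _
  rw [Measure.pi_map_pi (f := fun i w => Real.exp ((w + Real.log (β i)) / τ))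
    fun i => by fun_prop]
  simp only [hmarginal]
  have (i : ι) : SigmaFinite ((volume.restrict (Set.Ici 0)).withDensity
    fun y => ENNReal.ofReal (frechetPDF τ (β i) y)) := SigmaFinite.withDensity_ofReal _
  rw [pi_withDensity _ fun i => by fun_prop, ← Measure.restrict_pi_pi, Set.pi_univ_Ici,
    ← volume_pi]
  rfl

theorem frechetPDF_mul {τ b s x : ℝ} (hs : 0 ≤ s) (hx : 0 ≤ x) :
    frechetPDF τ b (s * x) = τ * s ^ (-τ - 1) * (b / x ^ (τ + 1)) *
      Real.exp (-(b / x ^ τ * s ^ (-τ))) := by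
  rw [frechetPDF, Real.mul_rpow hs hx, Real.mul_rpow hs hx, ← neg_add', Real.rpow_neg hx,
    Real.rpow_neg hx]
  ring_nf

theorem integral_rpow_mul_exp_neg_mul_rpow_Ioi {p a c : ℝ} (hp : p ≠ 0) (ha : 0 < a)
    (hc : 0 < c) :
    ∫ s in Set.Ioi (0 : ℝ), s ^ (p * a - 1) * Real.exp (-(c * s ^ p)) =
      |p|⁻¹ * (Real.Gamma a * c ^ (-a)) := by
  calc ∫ s in Set.Ioi (0 : ℝ), s ^ (p * a - 1) * Real.exp (-(c * s ^ p))
      = ∫ s in Set.Ioi (0 : ℝ), |p|⁻¹ * ((|p| * s ^ (p - 1)) •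
          ((s ^ p) ^ (a - 1) * Real.exp (-(c * s ^ p)))) := by
        refine setIntegral_congr_fun measurableSet_Ioi fun s (hs : 0 < s) => ?_
        have hpow : s ^ (p * a - 1) = s ^ (p - 1) * (s ^ p) ^ (a - 1) := by
          rw [← Real.rpow_mul hs.le, ← Real.rpow_add hs]
          ring_nf
        simp only [hpow, smul_eq_mul]
        field_simp
    _ = |p|⁻¹ * ∫ t in Set.Ioi (0 : ℝ), t ^ (a - 1) * Real.exp (-(c * t)) := by
        rw [integral_const_mul,
          integral_comp_rpow_Ioi (fun t => t ^ (a - 1) * Real.exp (-(c * t))) hp]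
    _ = |p|⁻¹ * (Real.Gamma a * c ^ (-a)) := by
        rw [Real.integral_rpow_mul_exp_neg_mul_Ioi ha hc, one_div, Real.inv_rpow hc.le,
          Real.rpow_neg hc.le, mul_comm (Real.Gamma a)]

theorem lintegral_rpow_mul_exp_neg_mul_rpow_Ioi {p a c : ℝ} (hp : p ≠ 0) (ha : 0 < a)
    (hc : 0 < c) :
    ∫⁻ s in Set.Ioi (0 : ℝ), ENNReal.ofReal (s ^ (p * a - 1) * Real.exp (-(c * s ^ p))) =
      ENNReal.ofReal (|p|⁻¹ * (Real.Gamma a * c ^ (-a))) := by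
  have hvalue := integral_rpow_mul_exp_neg_mul_rpow_Ioi hp ha hc
  have hpos : 0 < |p|⁻¹ * (Real.Gamma a * c ^ (-a)) :=
    mul_pos (inv_pos.mpr (abs_pos.mpr hp))
      (mul_pos (Real.Gamma_pos_of_pos ha) (Real.rpow_pos_of_pos hc _))
  have hnonneg : ∀ᵐ s ∂volume.restrict (Set.Ioi (0 : ℝ)),
      0 ≤ s ^ (p * a - 1) * Real.exp (-(c * s ^ p)) := by
    filter_upwards [ae_restrict_mem measurableSet_Ioi] with s hs
    exact mul_nonneg (Real.rpow_nonneg (le_of_lt hs) _) (Real.exp_nonneg _)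
  rw [← ofReal_integral_eq_lintegral_ofReal (.of_integral_ne_zero (hvalue ▸ hpos.ne')) hnonneg,
    hvalue]

theorem pow_mul_prod_frechetPDF {n : ℕ} {τ s : ℝ} (hs : 0 < s) {x : Fin (n + 1) → ℝ}
    (hx : 0 ≤ x) (β : Fin (n + 1) → ℝ) :
    s ^ n * ∏ i, frechetPDF τ (β i) (s * x i) =
      τ ^ (n + 1) * (∏ i, β i / x i ^ (τ + 1)) *
        (s ^ (-τ * (n + 1) - 1) * Real.exp (-((∑ j, β j / x j ^ τ) * s ^ (-τ)))) := by
  have hpow : s ^ n * (s ^ (-τ - 1)) ^ (n + 1) = s ^ (-τ * (n + 1) - 1) := by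
    rw [← Real.rpow_natCast, ← Real.rpow_mul_natCast hs.le, ← Real.rpow_add hs]
    push_cast
    ring_nf
  simp only [frechetPDF_mul hs.le (hx _), prod_mul_distrib, prod_const, card_univ,
    Fintype.card_fin, ← Real.exp_sum, sum_neg_distrib, ← sum_mul, ← hpow]
  ring

-- The boundary `x i = 0` needs no separate case: there `β i / x i ^ (τ + 1) = β i / 0 = 0`, so both
-- sides vanish, while a positive coordinate of `x` keeps the rate `∑ j, β j / x j ^ τ` positive.
theorem lintegral_radial_frechetPDF {n : ℕ} {τ : ℝ} (hτ : 0 < τ) {β x : Fin (n + 1) → ℝ}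
    (hβ : ∀ i, 0 < β i) (hx : 0 < x) :
    ∫⁻ s in Set.Ioi (0 : ℝ), ENNReal.ofReal (s ^ n) *
        ∏ i, ENNReal.ofReal (frechetPDF τ (β i) (s * x i)) =
      ENNReal.ofReal (concreteDensity (n + 1) β τ x) := by
  obtain ⟨hx_nonneg, j, hxj⟩ := Pi.lt_def.mp hx
  have hterm_nonneg (a : ℝ) (i : Fin (n + 1)) : 0 ≤ β i / x i ^ a :=
    div_nonneg (hβ i).le (Real.rpow_nonneg (hx_nonneg i) _)
  have hrate : 0 < ∑ i, β i / x i ^ τ :=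
    sum_pos' (fun i _ => hterm_nonneg τ i)
      ⟨j, mem_univ j, div_pos (hβ j) (Real.rpow_pos_of_pos hxj _)⟩
  have hcoeff : 0 ≤ τ ^ (n + 1) * ∏ i, β i / x i ^ (τ + 1) :=
    mul_nonneg (by positivity) (prod_nonneg fun i _ => hterm_nonneg _ i)
  have hfrechet (s : ℝ) (hs : 0 < s) (i : Fin (n + 1)) : 0 ≤ frechetPDF τ (β i) (s * x i) :=
    frechetPDF_nonneg hτ.le (hβ i).le (mul_nonneg hs.le (hx_nonneg i))
  have hintegrand (s : ℝ) (hs : 0 < s) :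
      ENNReal.ofReal (s ^ n) * ∏ i, ENNReal.ofReal (frechetPDF τ (β i) (s * x i)) =
        ENNReal.ofReal (τ ^ (n + 1) * ∏ i, β i / x i ^ (τ + 1)) * ENNReal.ofReal
          (s ^ (-τ * (n + 1) - 1) * Real.exp (-((∑ i, β i / x i ^ τ) * s ^ (-τ)))) := by
    rw [← ENNReal.ofReal_prod_of_nonneg fun i _ => hfrechet s hs i,
      ← ENNReal.ofReal_mul (by positivity), ← ENNReal.ofReal_mul hcoeff,
      pow_mul_prod_frechetPDF hs hx_nonneg]
  rw [setLIntegral_congr_fun measurableSet_Ioi hintegrand,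
    lintegral_const_mul' _ _ ENNReal.ofReal_ne_top,
    lintegral_rpow_mul_exp_neg_mul_rpow_Ioi (neg_ne_zero.mpr hτ.ne') (by positivity) hrate,
    ← ENNReal.ofReal_mul hcoeff, Real.Gamma_nat_eq_factorial, abs_neg, abs_of_pos hτ,
    concreteDensity, add_tsub_cancel_right, Nat.cast_add_one, pow_succ τ]
  congr 1
  field_simp

/-- The pushforward of a product of `K` independent standard Gumbel distributions
under `w ↦ softmax((w + log β)/τ)` is the Concrete distribution `C(β, τ)`. -/
theorem gumbel_softmax_is_concrete
    (K : ℕ) (hK : 2 ≤ K) (τ : ℝ) (hτ : 0 < τ)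
    (β : Fin K → ℝ) (hβ : ∀ i, 0 < β i) :
    Measure.map
      (fun w : Fin K → ℝ => fun i =>
        Real.exp ((w i + Real.log (β i)) / τ) /
          ∑ j, Real.exp ((w j + Real.log (β j)) / τ))
      (Measure.pi fun _ : Fin K => gumbelMeasure)
    = (simplexMeasure K).withDensity
        (fun x => ENNReal.ofReal (concreteDensity K β τ x)) := by
  obtain ⟨n, rfl⟩ : ∃ n, K = n + 1 := ⟨K - 1, by omega⟩
  have hnormalize : Measurable fun (y : Fin (n + 1) → ℝ) i => y i / ∑ j, y j := by fun_prop
  calc _ = ((Measure.pi fun _ : Fin (n + 1) => gumbelMeasure).map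
          fun w i => Real.exp ((w i + Real.log (β i)) / τ)).map fun y i => y i / ∑ j, y j :=
        (Measure.map_map hnormalize (by fun_prop)).symm
    _ = (simplexMeasure (n + 1)).withDensity fun x => ∫⁻ s in Set.Ioi (0 : ℝ),
          ENNReal.ofReal (s ^ n) * ∏ i, ENNReal.ofReal (frechetPDF τ (β i) (s * x i)) := by
        rw [map_exp_pi_gumbelMeasure hτ hβ, map_normalize_withDensity (by fun_prop)]
        rfl
    _ = _ := withDensity_congr_ae <| ae_mem_stdSimplex_simplexMeasure.mono fun x hx =>
        lintegral_radial_frechetPDF hτ hβ <|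
          lt_of_le_of_ne hx.1 (by rintro rfl; simpa using hx.2)
end
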